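/- Fix i ≥ 1 and a sequence (ρ_j)_{j≥1} of positive reals with ∑_j h_j < ∞ and ∑_j j h_j < ∞. Viewing π_0 and ∑_{j=0}^∞ j π_j as functions of ρ_i (holding all ρ_j, j ≠ i, fixed, and restricting ρ_i to values keeping both series convergent), π_0 is a strictly decreasing function of ρ_i and ∑_{j=0}^∞ j π_j is a strictly increasing function of ρ_i. -/

import Mathlib

/-- `hseq ρ i = ∏_{j=1}^i ρ_j`, with `hseq ρ 0 = 1`. -/
noncomputable def hseq (ρ : ℕ → ℝ) (i : ℕ) : ℝ := ∏ j ∈ Finset.Icc 1 i, ρ j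

/-- Stationary distribution `π_i = h_i / ∑_j h_j` of the birth–death chain. -/
noncomputable def piseq (ρ : ℕ → ℝ) (i : ℕ) : ℝ := hseq ρ i / ∑' j, hseq ρ j

/-!
If `σ ≤ τ` coordinatewise, then the likelihood ratio `hseq τ j / hseq σ j = ∏_{k=1}^j τ_k / σ_k` is
nondecreasing in `j`. Weighting by `hseq σ`, an increasing function `f` and this ratio are therefore
positively correlated, which is Chebyshev's sum inequality and says exactly that the expectation of
`f` under `piseq σ` is at most its expectation under `piseq τ`. Chebyshev's inequality follows by
expanding `∑_{a, b} w_a w_b (f_a - f_b) (g_a - g_b) ≥ 0`, and it is strict because the pair `(0, i)`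
contributes a positive term.
-/

theorem tsum_mul_tsum_lt_tsum_mul_tsum_of_monovary {ι : Type*} {w f g : ι → ℝ}
    (hw : ∀ a, 0 ≤ w a) (hfg : Monovary f g) (hw_sum : Summable w)
    (hf_sum : Summable fun a => f a * w a) (hg_sum : Summable fun a => g a * w a)
    (hfg_sum : Summable fun a => f a * (g a * w a))
    (hlt : ∃ a b, 0 < w a ∧ 0 < w b ∧ f a < f b ∧ g a < g b) :
    (∑' a, f a * w a) * ∑' a, g a * w a < (∑' a, w a) * ∑' a, f a * (g a * w a) := by
  have hasSum_prod {x y : ι → ℝ} (hx : Summable x) (hy : Summable y) :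
      HasSum (fun p : ι × ι => x p.1 * y p.2) ((∑' a, x a) * ∑' a, y a) :=
    hx.hasSum.mul hy.hasSum (summable_mul_of_summable_norm hx.norm hy.norm)
  have hasSum_sub_mul_sub :
      HasSum (fun p : ι × ι => w p.1 * w p.2 * ((f p.2 - f p.1) * (g p.2 - g p.1)))
        ((∑' a, w a) * (∑' a, f a * (g a * w a)) + (∑' a, f a * (g a * w a)) * (∑' a, w a)
          - ((∑' a, f a * w a) * (∑' a, g a * w a)
            + (∑' a, g a * w a) * ∑' a, f a * w a)) :=
    (((hasSum_prod hw_sum hfg_sum).add (hasSum_prod hfg_sum hw_sum)).sub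
      ((hasSum_prod hf_sum hg_sum).add (hasSum_prod hg_sum hf_sum))).congr_fun
        fun p => by ring
  have term_nonneg (p : ι × ι) :
      0 ≤ w p.1 * w p.2 * ((f p.2 - f p.1) * (g p.2 - g p.1)) :=
    mul_nonneg (mul_nonneg (hw _) (hw _)) (monovary_iff_forall_mul_nonneg.mp hfg _ _)
  obtain ⟨a, b, hwa, hwb, hfab, hgab⟩ := hlt
  have term_pos : 0 < w a * w b * ((f b - f a) * (g b - g a)) :=
    mul_pos (mul_pos hwa hwb) (mul_pos (sub_pos.mpr hfab) (sub_pos.mpr hgab))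
  have sum_pos := hasSum_sub_mul_sub.summable.tsum_pos term_nonneg (a, b) term_pos
  rw [hasSum_sub_mul_sub.tsum_eq] at sum_pos
  linarith

theorem summable_of_summable_natCast_mul {u : ℕ → ℝ}
    (hu : Summable fun n : ℕ => (n : ℝ) * u n) : Summable u := by
  refine hu.norm.of_norm_bounded_eventually_nat ?_
  filter_upwards [Filter.eventually_ge_atTop 1] with n hn
  rw [norm_mul, Real.norm_natCast]
  exact le_mul_of_one_le_left (norm_nonneg _) (mod_cast hn)

section hseq

variable {ρ σ τ : ℕ → ℝ} {i n : ℕ}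

@[simp]
theorem hseq_zero (ρ : ℕ → ℝ) : hseq ρ 0 = 1 := by simp [hseq]

theorem hseq_succ (ρ : ℕ → ℝ) (n : ℕ) : hseq ρ (n + 1) = hseq ρ n * ρ (n + 1) :=
  Finset.prod_Icc_succ_top (Nat.le_add_left 1 n) ρ

theorem hseq_div (σ τ : ℕ → ℝ) (n : ℕ) : hseq (τ / σ) n = hseq τ n / hseq σ n :=
  Finset.prod_div_distrib τ σ

theorem hseq_pos (hρ : ∀ j, 1 ≤ j → 0 < ρ j) (n : ℕ) : 0 < hseq ρ n :=
  Finset.prod_pos fun j hj => hρ j (Finset.mem_Icc.mp hj).1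

theorem hseq_le_hseq (hσ : ∀ j, 1 ≤ j → 0 ≤ σ j) (hle : ∀ j, 1 ≤ j → σ j ≤ τ j) (n : ℕ) :
    hseq σ n ≤ hseq τ n :=
  Finset.prod_le_prod (fun j hj => hσ j (Finset.mem_Icc.mp hj).1)
    fun j hj => hle j (Finset.mem_Icc.mp hj).1

theorem hseq_lt_hseq (hσ : ∀ j, 1 ≤ j → 0 < σ j) (hle : ∀ j, 1 ≤ j → σ j ≤ τ j)
    (hi : 1 ≤ i) (hlt : σ i < τ i) (hin : i ≤ n) : hseq σ n < hseq τ n :=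
  Finset.prod_lt_prod (fun j hj => hσ j (Finset.mem_Icc.mp hj).1)
    (fun j hj => hle j (Finset.mem_Icc.mp hj).1) ⟨i, Finset.mem_Icc.mpr ⟨hi, hin⟩, hlt⟩

theorem monotone_hseq (hρ : ∀ j, 1 ≤ j → 1 ≤ ρ j) : Monotone (hseq ρ) := by
  refine monotone_nat_of_le_succ fun n => ?_
  rw [hseq_succ]
  exact le_mul_of_one_le_right (hseq_pos (fun j hj => one_pos.trans_le (hρ j hj)) n).le
    (hρ (n + 1) (Nat.le_add_left 1 n))

theorem monotone_hseq_div_hseq (hσ : ∀ j, 1 ≤ j → 0 < σ j) (hle : ∀ j, 1 ≤ j → σ j ≤ τ j) :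
    Monotone fun n => hseq τ n / hseq σ n := by
  simp only [← hseq_div]
  exact monotone_hseq fun j hj => (one_le_div (hσ j hj)).mpr (hle j hj)

theorem summable_mul_hseq_of_le (hσ : ∀ j, 1 ≤ j → 0 < σ j) (hle : ∀ j, 1 ≤ j → σ j ≤ τ j)
    {f : ℕ → ℝ} (hτ : Summable fun j => f j * hseq τ j) :
    Summable fun j => f j * hseq σ j := by
  refine hτ.norm.of_norm_bounded fun j => ?_
  have hσj := (hseq_pos hσ j).le
  have hστj := hseq_le_hseq (fun j hj => (hσ j hj).le) hle j
  rw [norm_mul, norm_mul, Real.norm_of_nonneg hσj, Real.norm_of_nonneg (hσj.trans hστj)]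
  exact mul_le_mul_of_nonneg_left hστj (norm_nonneg _)

theorem summable_hseq_of_le (hσ : ∀ j, 1 ≤ j → 0 < σ j) (hle : ∀ j, 1 ≤ j → σ j ≤ τ j)
    (hτ : Summable (hseq τ)) : Summable (hseq σ) :=
  hτ.of_nonneg_of_le (fun j => (hseq_pos hσ j).le)
    (hseq_le_hseq (fun j hj => (hσ j hj).le) hle)

theorem tsum_hseq_pos (hρ : ∀ j, 1 ≤ j → 0 < ρ j) (hsum : Summable (hseq ρ)) :
    0 < ∑' j, hseq ρ j :=
  hsum.tsum_pos (fun j => (hseq_pos hρ j).le) 0 (hseq_pos hρ 0)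

end hseq

section piseq

variable {σ τ : ℕ → ℝ} {i : ℕ}

theorem tsum_mul_piseq (ρ f : ℕ → ℝ) :
    ∑' j, f j * piseq ρ j = (∑' j, f j * hseq ρ j) / ∑' j, hseq ρ j := by
  simp only [piseq, ← mul_div_assoc, tsum_div_const]

theorem piseq_zero_lt_piseq_zero (hi : 1 ≤ i) (hσ : ∀ j, 1 ≤ j → 0 < σ j)
    (hle : ∀ j, 1 ≤ j → σ j ≤ τ j) (hlt : σ i < τ i) (hτ_sum : Summable (hseq τ)) :
    piseq τ 0 < piseq σ 0 := by
  have hσ_sum := summable_hseq_of_le hσ hle hτ_sum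
  have tsum_lt : ∑' j, hseq σ j < ∑' j, hseq τ j :=
    hσ_sum.tsum_lt_tsum (hseq_le_hseq (fun j hj => (hσ j hj).le) hle)
      (hseq_lt_hseq hσ hle hi hlt le_rfl) hτ_sum
  simp only [piseq, hseq_zero]
  exact one_div_lt_one_div_of_lt (tsum_hseq_pos hσ hσ_sum) tsum_lt

theorem tsum_mul_piseq_lt_tsum_mul_piseq (hσ : ∀ j, 1 ≤ j → 0 < σ j)
    (hle : ∀ j, 1 ≤ j → σ j ≤ τ j) (hlt : σ i < τ i) {f : ℕ → ℝ} (hf : Monotone f)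
    (hfi : f 0 < f i) (hτ_sum : Summable (hseq τ))
    (hτf_sum : Summable fun j => f j * hseq τ j) :
    ∑' j, f j * piseq σ j < ∑' j, f j * piseq τ j := by
  have hσ_sum := summable_hseq_of_le hσ hle hτ_sum
  have hi : 1 ≤ i := Nat.pos_of_ne_zero fun h => hfi.ne (congrArg f h.symm)
  have ratio_lt : hseq τ 0 / hseq σ 0 < hseq τ i / hseq σ i := by
    simpa only [hseq_zero, div_one] using
      (one_lt_div (hseq_pos hσ i)).mpr (hseq_lt_hseq hσ hle hi hlt le_rfl)
  have ratio_mul (j : ℕ) : hseq τ j / hseq σ j * hseq σ j = hseq τ j :=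
    div_mul_cancel₀ _ (hseq_pos hσ j).ne'
  have chebyshev := tsum_mul_tsum_lt_tsum_mul_tsum_of_monovary (fun j => (hseq_pos hσ j).le)
    (hf.monovary (monotone_hseq_div_hseq hσ hle)) hσ_sum
    (summable_mul_hseq_of_le hσ hle hτf_sum) (by simpa only [ratio_mul] using hτ_sum)
    (by simpa only [ratio_mul] using hτf_sum)
    ⟨0, i, hseq_pos hσ 0, hseq_pos hσ i, hfi, ratio_lt⟩
  simp only [ratio_mul] at chebyshev
  have hτ (j : ℕ) (hj : 1 ≤ j) : 0 < τ j := (hσ j hj).trans_le (hle j hj)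
  rw [tsum_mul_piseq, tsum_mul_piseq,
    div_lt_div_iff₀ (tsum_hseq_pos hσ hσ_sum) (tsum_hseq_pos hτ hτ_sum)]
  exact chebyshev.trans_eq (mul_comm _ _)

theorem stmt3_general (hi : 1 ≤ i) (hσ : ∀ j, 1 ≤ j → 0 < σ j)
    (hle : ∀ j, 1 ≤ j → σ j ≤ τ j) (hlt : σ i < τ i)
    (hτ_mean : Summable fun j : ℕ => (j : ℝ) * hseq τ j) :
    piseq τ 0 < piseq σ 0 ∧
      ∑' j : ℕ, (j : ℝ) * piseq σ j < ∑' j : ℕ, (j : ℝ) * piseq τ j := by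
  have hτ_sum := summable_of_summable_natCast_mul hτ_mean
  exact ⟨piseq_zero_lt_piseq_zero hi hσ hle hlt hτ_sum,
    tsum_mul_piseq_lt_tsum_mul_piseq hσ hle hlt Nat.mono_cast
      (Nat.cast_lt.mpr hi) hτ_sum hτ_mean⟩

end piseq

/-- Fix `i ≥ 1`. Viewing `π_0` and `∑_j j π_j` as functions of
`ρ_i` (all other coordinates fixed, and restricting to values keeping both
series convergent), `π_0` is strictly decreasing in `ρ_i`, and `∑_j j π_j` is
strictly increasing in `ρ_i`: for two positive sequences `σ, τ` agreeing off
coordinate `i` with `σ_i < τ_i`, one has `π_0(τ) < π_0(σ)` and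
`∑_j j π_j(σ) < ∑_j j π_j(τ)`. -/
theorem stmt3 (i : ℕ) (hi : 1 ≤ i) (σ τ : ℕ → ℝ)
    (hσpos : ∀ j : ℕ, 1 ≤ j → 0 < σ j) (hτpos : ∀ j : ℕ, 1 ≤ j → 0 < τ j)
    (hagree : ∀ j : ℕ, j ≠ i → τ j = σ j) (hlt : σ i < τ i)
    (hσsum : Summable (hseq σ)) (hσmean : Summable (fun j : ℕ => (j : ℝ) * hseq σ j))
    (hτsum : Summable (hseq τ)) (hτmean : Summable (fun j : ℕ => (j : ℝ) * hseq τ j)) :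
    piseq τ 0 < piseq σ 0 ∧
      (∑' j : ℕ, (j : ℝ) * piseq σ j) < ∑' j : ℕ, (j : ℝ) * piseq τ j := by
  have hle (j : ℕ) (_ : 1 ≤ j) : σ j ≤ τ j := by
    obtain rfl | hj := eq_or_ne j i
    exacts [hlt.le, (hagree j hj).ge]
  exact stmt3_general hi hσpos hle hlt hτmean
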